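/- arXiv:1906.10668 — 2 statements merged into one kernel-verified Lean document; each statement's English description precedes it below -/
import Mathlib

section
/- Let p be a prime, q = p^r a power of p, and n ≥ 1 an integer with n^4 ≤ 4q (equivalently n^2 ≤ 2√q). Then there exists an integer t such that t^2 ≤ 4q, p does not divide t, and n^2 divides q + 1 − t. -/
/-! Every residue class modulo `m ≠ 0` has two representatives in `[-|m|, |m|]` that differ by
`|m|`. If `p` divides both, it divides `m` and therefore the whole class; this cannot happen to the
class of `q + 1` when `p ∣ q`. The bound `m ^ 2 ≤ 4 q` places `[-|m|, |m|]` inside the Hasse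
interval. -/

theorem exists_abs_le_and_not_dvd_and_dvd_sub {p a m : ℤ} (hm : m ≠ 0) (h : ¬(p ∣ a ∧ p ∣ m)) :
    ∃ t : ℤ, |t| ≤ |m| ∧ ¬p ∣ t ∧ m ∣ a - t := by
  have ht_nonneg : 0 ≤ a % m := Int.emod_nonneg a hm
  have ht_lt : a % m < |m| := Int.emod_lt_abs a hm
  have hdvd : m ∣ a - a % m := Int.dvd_self_sub_emod
  by_cases hpt : p ∣ a % m
  · refine ⟨a % m - |m|, abs_le.mpr ⟨by linarith, by linarith⟩, fun hpt' => ?_, ?_⟩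
    · have hpm : p ∣ m := (dvd_abs p m).mp ((dvd_sub_right hpt).mp hpt')
      exact h ⟨(dvd_iff_dvd_of_dvd_sub (hpm.trans hdvd)).mpr hpt, hpm⟩
    · rw [← sub_add]
      exact dvd_add hdvd (self_dvd_abs m)
  · exact ⟨a % m, (abs_of_nonneg ht_nonneg).trans_le ht_lt.le, hpt, hdvd⟩

theorem exists_admissible_trace_general {p q m : ℤ} (hp : ¬IsUnit p) (hpq : p ∣ q) (hm : m ≠ 0)
    (hmq : m ^ 2 ≤ 4 * q) :
    ∃ t : ℤ, t ^ 2 ≤ 4 * q ∧ ¬p ∣ t ∧ m ∣ q + 1 - t := by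
  have hpq_succ : ¬p ∣ q + 1 := fun h => hp (isUnit_of_dvd_one ((dvd_add_right hpq).mp h))
  obtain ⟨t, htm, hpt, hdvd⟩ :=
    exists_abs_le_and_not_dvd_and_dvd_sub hm fun h => hpq_succ h.1
  exact ⟨t, (sq_le_sq.mpr htm).trans hmq, hpt, hdvd⟩

/-- If `n ^ 4 ≤ 4 q` with `q = p ^ r`, there is an integer `t` with `t ^ 2 ≤ 4 q`, `p ∤ t`, and
`n ^ 2 ∣ q + 1 - t`. -/
theorem exists_admissible_trace
    (p r q : ℕ) (hp : p.Prime) (hr : 0 < r) (hq : q = p ^ r)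
    (n : ℕ) (hn : 1 ≤ n) (h : n ^ 4 ≤ 4 * q) :
    ∃ t : ℤ, t ^ 2 ≤ 4 * q ∧ ¬ (p : ℤ) ∣ t ∧ (n : ℤ) ^ 2 ∣ (q + 1 - t) :=
  exists_admissible_trace_general (Nat.prime_iff_prime_int.mp hp).not_isUnit
    (mod_cast hq ▸ dvd_pow_self p hr.ne') (by positivity) (by rw [← pow_mul]; exact_mod_cast h)
end

section
/- Let k be a field of characteristic p, let q = p^e with e ≥ 1, let n ≥ 2, and let V_n be the k-subspace of k[x_0,…,x_{n−1}] spanned by the monomials x_i^q·x_j for 0 ≤ i, j ≤ n−1. Suppose f ∈ V_n is nonzero and there exist three linear forms ℓ₁, ℓ₂, ℓ₃, pairwise non-proportional, each of which divides f. Then there exist two linearly independent linear forms u, v and a nonzero scalar c ∈ k such that f = c·(u^q·v − v^q·u). -/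
/-!
A linear change of variables preserves `V_n`, because `x ↦ x ^ q` is additive, and it turns
linearly independent linear forms into distinct variables. Divisibility by a variable can be read
off the support: if variables divide `f ∈ V_n`, then all of them occur in each monomial
`x_i ^ q * x_j` of `f`. Hence three independent linear forms divide only `f = 0`, and two
independent ones `u`, `v` force `f = α • (u ^ q * v) + β • (v ^ q * u)`.

So `ℓ 2` is a combination of `ℓ 0` and `ℓ 1`, with nonzero coefficients by non-proportionality.
After rescaling, `ℓ 2 = u + v` with `u`, `v` multiples of `ℓ 0`, `ℓ 1`, and evaluating `f` at a
point where `u = 1` and `v = -1` gives `β = -α`.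
-/

open MvPolynomial

lemma smul_dvd_iff_of_isUnit {R A : Type*} [CommSemiring R] [CommSemiring A] [Algebra R A] {c : R}
    (hc : IsUnit c) {a b : A} : c • a ∣ b ↔ a ∣ b := by
  rw [Algebra.smul_def, (hc.map (algebraMap R A)).mul_left_dvd]

lemma exists_basis_extending {σ ι K M : Type*} [DivisionRing K] [AddCommGroup M]
    [Module K M] (b₀ : Module.Basis σ K M) {v : ι → M} (hv : LinearIndependent K v) :
    ∃ (b : Module.Basis σ K M) (a : ι ↪ σ), ∀ i, b (a i) = v i := by
  let b := Module.Basis.extend hv.linearIndepOn_id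
  let a (i : ι) := b.indexEquiv b₀ ⟨v i, hv.linearIndepOn_id.subset_extend _ ⟨i, rfl⟩⟩
  have ha : Function.Injective a := fun i j hij => hv.injective <|
    congrArg Subtype.val ((b.indexEquiv b₀).injective hij)
  exact ⟨b.reindex (b.indexEquiv b₀), ⟨a, ha⟩, fun i => by simp [a, b]⟩

lemma exists_smul_add_smul_eq_of_not_linearIndependent {K M : Type*} [Field K] [AddCommGroup M]
    [Module K M] {ℓ : Fin 3 → M} (hprop : ∀ i j, i ≠ j → ∀ c : K, ℓ i ≠ c • ℓ j)
    (hdep : ¬ LinearIndependent K ℓ) :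
    ∃ α β : K, α ≠ 0 ∧ β ≠ 0 ∧ α • ℓ 0 + β • ℓ 1 = ℓ 2 ∧
      LinearIndependent K ![α • ℓ 0, β • ℓ 1] := by
  have hne : ℓ 0 ≠ 0 := by simpa using hprop 0 1 (by decide) 0
  have hind : LinearIndependent K ![ℓ 0, ℓ 1] :=
    (LinearIndependent.pair_iff' hne).2 fun c hc => hprop 1 0 (by decide) c hc.symm
  have hinit : Fin.init ℓ = ![ℓ 0, ℓ 1] := by
    ext i; fin_cases i <;> rfl
  have hmem : ℓ 2 ∈ Submodule.span K {ℓ 0, ℓ 1} := by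
    rw [linearIndependent_finSucc', hinit, Matrix.range_cons_cons_empty] at hdep
    by_contra hmem
    exact hdep ⟨hind, hmem⟩
  obtain ⟨α, β, h2⟩ := Submodule.mem_span_pair.1 hmem
  have hα : α ≠ 0 := by
    rintro rfl
    exact hprop 2 1 (by decide) β (by rw [← h2, zero_smul, zero_add])
  have hβ : β ≠ 0 := by
    rintro rfl
    exact hprop 2 0 (by decide) α (by rw [← h2, zero_smul, add_zero])
  exact ⟨α, β, hα, hβ, h2,
    (LinearIndependent.pair_smul_smul_iff hα.isUnit hβ.isUnit).2 hind⟩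

section Monomials

variable {σ R : Type*} [CommSemiring R]

lemma X_pow_mul_X (i j : σ) (q : ℕ) :
    (X i ^ q * X j : MvPolynomial σ R) =
      monomial (Finsupp.single i q + Finsupp.single j 1) 1 := by
  rw [X_pow_eq_monomial, X, monomial_mul, one_mul]

lemma apply_ne_zero_of_X_dvd {f : MvPolynomial σ R} {a : σ} (ha : X a ∣ f) {m : σ →₀ ℕ}
    (hm : m ∈ f.support) : m a ≠ 0 := by
  rw [← Ideal.mem_span_singleton, ← Set.image_singleton, mem_ideal_span_X_image] at ha
  simpa using ha m hm

lemma eq_or_eq_of_X_dvd {f : MvPolynomial σ R} {a i j : σ} {q : ℕ} (ha : X a ∣ f)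
    (hm : Finsupp.single i q + Finsupp.single j 1 ∈ f.support) : a = i ∨ a = j := by
  by_contra! hne
  exact apply_ne_zero_of_X_dvd ha hm (by simp [hne.1.symm, hne.2.symm])

end Monomials

section LinearForms

variable {σ κ R : Type*} [CommRing R]

/-- The variables, as a basis of the space of linear forms. -/
noncomputable def linearFormsBasis (σ R : Type*) [CommRing R] :
    Module.Basis σ R (homogeneousSubmodule σ R 1) :=
  (Module.Basis.span (linearIndependent_X σ R)).map
    (LinearEquiv.ofEq _ _ homogeneousSubmodule_one_eq_span_X.symm)

lemma coe_linearFormsBasis (i : σ) : (linearFormsBasis σ R i : MvPolynomial σ R) = X i := by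
  simp [linearFormsBasis, Module.Basis.span_apply]

/-- The isomorphism of polynomial rings that takes a basis of the linear forms in the variables
`σ` to the variables `κ`. It is the composite of the two identifications with the symmetric algebra
of the space of linear forms. -/
noncomputable def changeOfVariables (b : Module.Basis κ R (homogeneousSubmodule σ R 1)) :
    MvPolynomial σ R ≃ₐ[R] MvPolynomial κ R :=
  (SymmetricAlgebra.equivMvPolynomial (linearFormsBasis σ R)).symm.trans
    (SymmetricAlgebra.equivMvPolynomial b)

lemma changeOfVariables_coe (b : Module.Basis κ R (homogeneousSubmodule σ R 1))
    (l : homogeneousSubmodule σ R 1) :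
    changeOfVariables b l = b.constr R X l := by
  have hcomp : (changeOfVariables b).toLinearMap ∘ₗ (homogeneousSubmodule σ R 1).subtype =
      b.constr R X := by
    refine (linearFormsBasis σ R).ext fun i => ?_
    simp [coe_linearFormsBasis, changeOfVariables, SymmetricAlgebra.equivMvPolynomial]
  exact LinearMap.congr_fun hcomp l

lemma changeOfVariables_coe_basis (b : Module.Basis κ R (homogeneousSubmodule σ R 1)) (s : κ) :
    changeOfVariables b (b s) = X s := by
  rw [changeOfVariables_coe, Module.Basis.constr_basis]

lemma isHomogeneous_changeOfVariables (b : Module.Basis κ R (homogeneousSubmodule σ R 1))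
    {l : MvPolynomial σ R} (hl : l.IsHomogeneous 1) : (changeOfVariables b l).IsHomogeneous 1 := by
  rw [changeOfVariables_coe b ⟨l, hl⟩, ← mem_homogeneousSubmodule,
    homogeneousSubmodule_one_eq_span_X, ← b.constr_range R]
  exact LinearMap.mem_range_self _ _

end LinearForms

lemma exists_algEquiv_apply_eq_X {σ ι k : Type*} [Field k] {v : ι → MvPolynomial σ k}
    (hv : LinearIndependent k v) (hhom : ∀ i, (v i).IsHomogeneous 1) :
    ∃ (E : MvPolynomial σ k ≃ₐ[k] MvPolynomial σ k) (a : ι ↪ σ),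
      (∀ i, (E (X i)).IsHomogeneous 1) ∧ ∀ i, E (v i) = X (a i) := by
  have hw : LinearIndependent k fun i => (⟨v i, hhom i⟩ : homogeneousSubmodule σ k 1) :=
    hv.of_comp (homogeneousSubmodule σ k 1).subtype
  obtain ⟨b, a, hb⟩ := exists_basis_extending (linearFormsBasis σ k) hw
  refine ⟨changeOfVariables b, a,
    fun i => isHomogeneous_changeOfVariables b (isHomogeneous_X k i), fun i => ?_⟩
  rw [← changeOfVariables_coe_basis b, hb]

/-- The space `V` of Frobenius forms: the linear combinations of the monomials `x_i ^ q * x_j`.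
For `σ = Fin n` this is `V_n`. The exponent `q` is arbitrary here and becomes a power of the
characteristic only where additivity of `x ↦ x ^ q` matters. -/
noncomputable def frobeniusForms (σ R : Type*) [CommSemiring R] (q : ℕ) :
    Submodule R (MvPolynomial σ R) :=
  Submodule.span R {g | ∃ i j : σ, g = X i ^ q * X j}

namespace frobeniusForms

variable {σ τ ι R k : Type*}

section Support

variable [CommSemiring R] {q : ℕ} {f : MvPolynomial σ R}

lemma exists_eq_single_add_single (hf : f ∈ frobeniusForms σ R q) {m : σ →₀ ℕ}
    (hm : m ∈ f.support) : ∃ i j, m = Finsupp.single i q + Finsupp.single j 1 := by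
  have hle : frobeniusForms σ R q ≤
      restrictSupport R {m | ∃ i j, m = Finsupp.single i q + Finsupp.single j 1} := by
    refine Submodule.span_le.2 ?_
    rintro _ ⟨i, j, rfl⟩
    rw [X_pow_mul_X]
    exact (monomial_mem_restrictSupport R).2 (.inl ⟨i, j, rfl⟩)
  exact (mem_restrictSupport_iff R).1 (hle hf) hm

lemma eq_zero_of_forall_X_dvd (hf : f ∈ frobeniusForms σ R q) {s : Finset σ} (hs : 2 < s.card)
    (hdvd : ∀ a ∈ s, X a ∣ f) : f = 0 := by
  classical
  by_contra hf0
  obtain ⟨m, hm⟩ := support_nonempty.2 hf0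
  obtain ⟨i, j, rfl⟩ := exists_eq_single_add_single hf hm
  have hsub : s ⊆ {i, j} := fun a ha => by simpa using eq_or_eq_of_X_dvd (hdvd a ha) hm
  exact hs.not_ge ((Finset.card_le_card hsub).trans Finset.card_le_two)

lemma exists_eq_smul_add_smul_of_X_dvd (hf : f ∈ frobeniusForms σ R q) {a b : σ} (hab : a ≠ b)
    (ha : X a ∣ f) (hb : X b ∣ f) :
    ∃ α β : R, f = α • (X a ^ q * X b) + β • (X b ^ q * X a) := by
  have hsupp : f ∈ restrictSupport R
      {Finsupp.single a q + Finsupp.single b 1, Finsupp.single b q + Finsupp.single a 1} := by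
    refine (mem_restrictSupport_iff R).2 fun m hm => ?_
    obtain ⟨i, j, rfl⟩ := exists_eq_single_add_single hf hm
    rcases eq_or_eq_of_X_dvd ha hm with rfl | rfl <;>
      rcases eq_or_eq_of_X_dvd hb hm with rfl | rfl <;> simp at hab ⊢
  rw [restrictSupport_eq_span, Set.image_pair, Submodule.mem_span_pair] at hsupp
  obtain ⟨α, β, rfl⟩ := hsupp
  exact ⟨α, β, by rw [X_pow_mul_X, X_pow_mul_X]⟩

end Support

lemma exists_eq_smul_sub_of_X_dvd [CommRing R] {p e : ℕ} [ExpChar R p] {f : MvPolynomial σ R}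
    (hf : f ∈ frobeniusForms σ R (p ^ e)) {a b : σ} (hab : a ≠ b)
    (ha : X a ∣ f) (hb : X b ∣ f) (hadd : X a + X b ∣ f) :
    ∃ c : R, f = c • (X a ^ p ^ e * X b - X b ^ p ^ e * X a) := by
  classical
  obtain ⟨α, β, rfl⟩ := exists_eq_smul_add_smul_of_X_dvd hf hab ha hb
  have heval := map_dvd (eval fun i => if i = a then (1 : R) else -1) hadd
  simp only [map_add, eval_X, if_true, hab.symm, if_false, add_neg_cancel, zero_dvd_iff, smul_eval,
    map_mul, map_pow, one_pow, neg_one_pow_expChar_pow] at heval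
  obtain rfl : β = -α := by linear_combination -heval
  exact ⟨α, by module⟩

section ChangeOfVariables

variable [CommSemiring R] {p e : ℕ} [ExpChar R p]

lemma pow_mul_mem {u v : MvPolynomial σ R} (hu : u.IsHomogeneous 1) (hv : v.IsHomogeneous 1) :
    u ^ p ^ e * v ∈ frobeniusForms σ R (p ^ e) := by
  rw [← mem_homogeneousSubmodule, homogeneousSubmodule_one_eq_span_X] at hu hv
  induction hv using Submodule.span_induction with
  | zero => simp
  | add v w _ _ hv hw => rw [mul_add]; exact add_mem hv hw
  | smul c v _ hv => rw [mul_smul_comm]; exact Submodule.smul_mem _ c hv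
  | mem v hv =>
    obtain ⟨j, rfl⟩ := hv
    induction hu using Submodule.span_induction with
    | zero =>
      rw [zero_pow (expChar_pow_pos R p e).ne', zero_mul]
      exact zero_mem _
    | add u w _ _ hu hw => rw [add_pow_expChar_pow, add_mul]; exact add_mem hu hw
    | smul c u _ hu => rw [smul_pow, smul_mul_assoc]; exact Submodule.smul_mem _ _ hu
    | mem u hu =>
      obtain ⟨i, rfl⟩ := hu
      exact Submodule.subset_span ⟨i, j, rfl⟩

lemma map_mem (φ : MvPolynomial σ R →ₐ[R] MvPolynomial τ R)
    (hφ : ∀ i, (φ (X i)).IsHomogeneous 1) {f : MvPolynomial σ R}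
    (hf : f ∈ frobeniusForms σ R (p ^ e)) : φ f ∈ frobeniusForms τ R (p ^ e) := by
  have hle : frobeniusForms σ R (p ^ e) ≤ (frobeniusForms τ R (p ^ e)).comap φ.toLinearMap := by
    refine Submodule.span_le.2 ?_
    rintro _ ⟨i, j, rfl⟩
    simpa using pow_mul_mem (hφ i) (hφ j)
  exact hle hf

end ChangeOfVariables

section Field

variable [Field k] {p e : ℕ} [ExpChar k p] {f : MvPolynomial σ k}

lemma eq_zero_of_forall_dvd [Fintype ι] (hι : 2 < Fintype.card ι)
    (hf : f ∈ frobeniusForms σ k (p ^ e)) {v : ι → MvPolynomial σ k} (hv : LinearIndependent k v)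
    (hhom : ∀ i, (v i).IsHomogeneous 1) (hdvd : ∀ i, v i ∣ f) : f = 0 := by
  obtain ⟨E, a, hE, hEv⟩ := exists_algEquiv_apply_eq_X hv hhom
  refine (map_eq_zero_iff E E.injective).1 (eq_zero_of_forall_X_dvd
    (map_mem E.toAlgHom hE hf) (s := Finset.univ.map a) (by simpa) ?_)
  simpa [← hEv] using fun i => map_dvd E (hdvd i)

lemma exists_eq_smul_sub_of_dvd (hf : f ∈ frobeniusForms σ k (p ^ e)) {u v : MvPolynomial σ k}
    (huv : LinearIndependent k ![u, v]) (hu : u.IsHomogeneous 1) (hv : v.IsHomogeneous 1)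
    (hdu : u ∣ f) (hdv : v ∣ f) (hadd : u + v ∣ f) :
    ∃ c : k, f = c • (u ^ p ^ e * v - v ^ p ^ e * u) := by
  obtain ⟨E, a, hE, hEX⟩ := exists_algEquiv_apply_eq_X huv (Fin.forall_fin_two.2 ⟨hu, hv⟩)
  have hEu : E u = X (a 0) := hEX 0
  have hEv : E v = X (a 1) := hEX 1
  obtain ⟨c, hc⟩ := exists_eq_smul_sub_of_X_dvd
    (map_mem E.toAlgHom hE hf) (a := a 0) (b := a 1) (by simp)
    (by simpa [hEu] using map_dvd E hdu) (by simpa [hEv] using map_dvd E hdv)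
    (by simpa [hEu, hEv] using map_dvd E hadd)
  refine ⟨c, E.injective ?_⟩
  simpa [hEu, hEv] using hc

end Field

end frobeniusForms

theorem three_linear_factors_implies_orbit_form_general {σ k : Type*} [Field k] (p e : ℕ)
    [ExpChar k p] (f : MvPolynomial σ k) (hf : f ∈ frobeniusForms σ k (p ^ e)) (hf0 : f ≠ 0)
    (ℓ : Fin 3 → MvPolynomial σ k) (hhom : ∀ i, (ℓ i).IsHomogeneous 1)
    (hprop : ∀ i j, i ≠ j → ∀ c : k, ℓ i ≠ c • ℓ j) (hdvd : ∀ i, ℓ i ∣ f) :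
    ∃ (u v : MvPolynomial σ k) (c : k),
      u.IsHomogeneous 1 ∧ v.IsHomogeneous 1 ∧ LinearIndependent k ![u, v] ∧ c ≠ 0 ∧
        f = c • (u ^ p ^ e * v - v ^ p ^ e * u) := by
  have hdep : ¬ LinearIndependent k ℓ := fun hind =>
    hf0 (frobeniusForms.eq_zero_of_forall_dvd (by simp) hf hind hhom hdvd)
  obtain ⟨α, β, hα, hβ, h2, hind⟩ := exists_smul_add_smul_eq_of_not_linearIndependent hprop hdep
  have hu : (α • ℓ 0).IsHomogeneous 1 := Submodule.smul_mem (homogeneousSubmodule σ k 1) α (hhom 0)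
  have hv : (β • ℓ 1).IsHomogeneous 1 := Submodule.smul_mem (homogeneousSubmodule σ k 1) β (hhom 1)
  obtain ⟨c, hc⟩ := frobeniusForms.exists_eq_smul_sub_of_dvd hf hind hu hv
    ((smul_dvd_iff_of_isUnit hα.isUnit).2 (hdvd 0)) ((smul_dvd_iff_of_isUnit hβ.isUnit).2 (hdvd 1))
    (h2 ▸ hdvd 2)
  refine ⟨α • ℓ 0, β • ℓ 1, c, hu, hv, hind, ?_, hc⟩
  rintro rfl
  exact hf0 (by rw [hc, zero_smul])

/-- A nonzero polynomial in `V_n = span {x_i^q x_j}` divisible by three pairwise non-proportional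
linear forms is, up to a nonzero scalar, of the form `u^q v - v^q u` with `u, v` linearly
independent linear forms. -/
theorem three_linear_factors_implies_orbit_form
    (p : ℕ) (hp : p.Prime) (e : ℕ) (he : 1 ≤ e) (q : ℕ) (hq : q = p ^ e)
    (k : Type) [Field k] [CharP k p] (n : ℕ) (hn : 2 ≤ n)
    (f : MvPolynomial (Fin n) k)
    (hf : f ∈ Submodule.span k
      {g : MvPolynomial (Fin n) k | ∃ i j : Fin n, g = X i ^ q * X j})
    (hf0 : f ≠ 0)
    (ℓ : Fin 3 → MvPolynomial (Fin n) k)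
    (hhom : ∀ i, (ℓ i).IsHomogeneous 1) (hne : ∀ i, ℓ i ≠ 0)
    (hprop : ∀ i j, i ≠ j → ∀ c : k, ℓ i ≠ c • ℓ j)
    (hdvd : ∀ i, ℓ i ∣ f) :
    ∃ (u v : MvPolynomial (Fin n) k) (c : k),
      u.IsHomogeneous 1 ∧ v.IsHomogeneous 1 ∧ LinearIndependent k ![u, v] ∧ c ≠ 0 ∧
        f = c • (u ^ q * v - v ^ q * u) := by
  subst hq
  have : ExpChar k p := .prime hp
  exact three_linear_factors_implies_orbit_form_general p e f hf hf0 ℓ hhom hprop hdvd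
end
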